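/- Let g : ℝ^n × ℝ^m → ℝ be differentiable, μ-strongly convex in x and μ-strongly concave in y, and have L₁-Lipschitz gradient: ‖∇g(z₁) − ∇g(z₂)‖₂ ≤ L₁‖z₁ − z₂‖₂ for all z₁, z₂. Define the merit function m(z) = (1/2)‖∇g(z)‖₂² and the duality gap G(x,y) = sup_{y' ∈ ℝ^m} g(x,y') − inf_{x' ∈ ℝ^n} g(x',y). Then for every z = (x,y) ∈ ℝ^n × ℝ^m, (μ/L₁²)·m(z) ≤ G(x,y) ≤ (L₁/μ²)·m(z). -/

import Mathlib

open scoped RealInnerProductSpace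

/-- Partial gradient in the first (minimization) variable. -/
noncomputable def gradX {n m : ℕ}
    (g : EuclideanSpace ℝ (Fin n) × EuclideanSpace ℝ (Fin m) → ℝ)
    (x : EuclideanSpace ℝ (Fin n)) (y : EuclideanSpace ℝ (Fin m)) :
    EuclideanSpace ℝ (Fin n) :=
  gradient (fun x' => g (x', y)) x

/-- Partial gradient in the second (maximization) variable. -/
noncomputable def gradY {n m : ℕ}
    (g : EuclideanSpace ℝ (Fin n) × EuclideanSpace ℝ (Fin m) → ℝ)
    (x : EuclideanSpace ℝ (Fin n)) (y : EuclideanSpace ℝ (Fin m)) :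
    EuclideanSpace ℝ (Fin m) :=
  gradient (fun y' => g (x, y')) y

theorem aux_quad (h h' : ℝ → ℝ) (a b : ℝ) (hd : ∀ t, HasDerivAt h (h' t) t)
    (hb : ∀ t, 0 ≤ t → a + b * t ≤ h' t) : h 0 + a + b / 2 ≤ h 1 := by
  have hd2 : ∀ t, HasDerivAt (fun t => h t - a * t - b / 2 * t ^ 2) (h' t - a - b * t) t := by
    intro t
    have h1 := ((hd t).sub ((hasDerivAt_id t).const_mul a)).sub
      ((hasDerivAt_pow 2 t).const_mul (b / 2))
    have e : h' t - a - b * t = h' t - a * 1 - b / 2 * ((2 : ℕ) * t ^ (2 - 1)) := by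
      norm_num
      ring
    rw [e]
    exact h1
  have hm : MonotoneOn (fun t => h t - a * t - b / 2 * t ^ 2) (Set.Ici 0) := by
    apply monotoneOn_of_deriv_nonneg (convex_Ici 0)
    · exact fun t _ => (hd2 t).continuousAt.continuousWithinAt
    · exact fun t _ => (hd2 t).differentiableAt.differentiableWithinAt
    · intro t ht
      rw [interior_Ici] at ht
      rw [(hd2 t).deriv]
      have := hb t (le_of_lt ht)
      linarith
  have := hm (show (0 : ℝ) ∈ Set.Ici 0 by simp) (show (1 : ℝ) ∈ Set.Ici 0 by simp) zero_le_one
  simp only at this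
  linarith

theorem aux_block {E : Type*} [NormedAddCommGroup E] [InnerProductSpace ℝ E] [CompleteSpace E]
    (f : E → ℝ) (F : E → E) (μ L : ℝ) (hμ : 0 < μ) (hL : 0 < L)
    (hF : ∀ x, HasGradientAt f (F x) x)
    (hconv : ∀ x y, μ * ‖x - y‖ ^ 2 ≤ ⟪F x - F y, x - y⟫)
    (hLip : ∀ x y, ‖F x - F y‖ ≤ L * ‖x - y‖) (x : E) :
    μ / L ^ 2 * (1 / 2 * ‖F x‖ ^ 2) ≤ f x - ⨅ x', f x' ∧
    f x - ⨅ x', f x' ≤ L / μ ^ 2 * (1 / 2 * ‖F x‖ ^ 2) := by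
  have hin : ∀ x y, ⟪F x - F y, x - y⟫ ≤ L * ‖x - y‖ ^ 2 := fun x y => by
    have h1 := real_inner_le_norm (F x - F y) (x - y)
    have h2 := mul_le_mul_of_nonneg_right (hLip x y) (norm_nonneg (x - y))
    nlinarith
  have hd : ∀ v t, HasDerivAt (fun t : ℝ => f (x + t • v)) ⟪F (x + t • v), v⟫ t := by
    intro v t
    have h1 : HasDerivAt (fun t : ℝ => x + t • v) v t := by
      simpa using ((hasDerivAt_id t).smul_const v).const_add x
    have h2 := (hF (x + t • v)).hasFDerivAt.comp_hasDerivAt t h1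
    simp only [InnerProductSpace.toDual_apply_apply] at h2
    exact h2
  have hlow : ∀ v, f x + ⟪F x, v⟫ + μ * ‖v‖ ^ 2 / 2 ≤ f (x + v) := by
    intro v
    have := aux_quad _ _ ⟪F x, v⟫ (μ * ‖v‖ ^ 2) (hd v) (by
      intro t ht
      rcases ht.eq_or_lt with rfl | ht
      · simp
      have h := hconv (x + t • v) x
      simp only [add_sub_cancel_left, inner_smul_right, norm_smul, inner_sub_left, Real.norm_eq_abs, mul_pow, sq_abs] at h
      have : t * (μ * ‖v‖ ^ 2 * t) ≤ t * (⟪F (x + t • v), v⟫ - ⟪F x, v⟫) := by linarith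
      have := le_of_mul_le_mul_left this ht
      linarith)
    simpa using this
  have hup : ∀ v, f (x + v) ≤ f x + ⟪F x, v⟫ + L * ‖v‖ ^ 2 / 2 := by
    intro v
    have := aux_quad _ _ (-⟪F x, v⟫) (-(L * ‖v‖ ^ 2)) (fun t => (hd v t).neg) (by
      intro t ht
      rcases ht.eq_or_lt with rfl | ht
      · simp
      have h := hin (x + t • v) x
      simp only [add_sub_cancel_left, inner_smul_right, norm_smul, inner_sub_left, Real.norm_eq_abs, mul_pow, sq_abs] at h
      have : t * (⟪F (x + t • v), v⟫ - ⟪F x, v⟫) ≤ t * (L * ‖v‖ ^ 2 * t) := by linarith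
      have := le_of_mul_le_mul_left this ht
      linarith)
    simp at this
    linarith
  have hlb : ∀ x', f x - 1 / (2 * μ) * ‖F x‖ ^ 2 ≤ f x' := by
    intro x'
    have h := hlow (x' - x)
    rw [add_sub_cancel] at h
    have h1 := neg_le_of_abs_le (abs_real_inner_le_norm (F x) (x' - x))
    have h2 : 0 ≤ 1 / (2 * μ) * (‖F x‖ - μ * ‖x' - x‖) ^ 2 := by positivity
    have h3 : 1 / (2 * μ) * (‖F x‖ - μ * ‖x' - x‖) ^ 2 = 1 / (2 * μ) * ‖F x‖ ^ 2
      - ‖F x‖ * ‖x' - x‖ + μ * ‖x' - x‖ ^ 2 / 2 := by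
      field_simp
      ring
    linarith
  have hbdd : BddBelow (Set.range f) := ⟨_, by rintro _ ⟨x', rfl⟩; exact hlb x'⟩
  have h1 : f x - 1 / (2 * μ) * ‖F x‖ ^ 2 ≤ ⨅ x', f x' := le_ciInf hlb
  have h2 : (⨅ x', f x') ≤ f x - 1 / (2 * L) * ‖F x‖ ^ 2 := by
    refine (ciInf_le hbdd (x + (-(1 / L)) • F x)).trans ((hup _).trans (le_of_eq ?_))
    rw [inner_smul_right, norm_smul, real_inner_self_eq_norm_sq, mul_pow, Real.norm_eq_abs, sq_abs]
    field_simp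
    ring
  by_cases h0 : F x = 0
  · simp [h0] at h1 h2 ⊢
    constructor <;> linarith
  have hle : μ ≤ L := by
    have a := (hconv (F x) 0).trans (hin (F x) 0)
    rw [sub_zero] at a
    exact le_of_mul_le_mul_right a (by positivity)
  have e1 : μ / L ^ 2 * (1 / 2 * ‖F x‖ ^ 2) ≤ 1 / (2 * L) * ‖F x‖ ^ 2 := by
    rw [← mul_assoc]
    gcongr
    rw [div_mul_div_comm, div_le_div_iff₀ (by positivity) (by positivity)]
    nlinarith
  have e2 : 1 / (2 * μ) * ‖F x‖ ^ 2 ≤ L / μ ^ 2 * (1 / 2 * ‖F x‖ ^ 2) := by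
    rw [← mul_assoc]
    gcongr
    rw [div_mul_div_comm, div_le_div_iff₀ (by positivity) (by positivity)]
    nlinarith
  constructor <;> linarith

/-- Proposition 1 of the paper: for a differentiable, `μ`-strongly-convex–strongly-concave
function `g` with `L₁`-Lipschitz gradient, the merit function `m(z) = (1/2)‖∇g(z)‖²` and the
duality gap `G(x,y) = sup_{y'} g(x,y') − inf_{x'} g(x',y)` satisfy
`(μ/L₁²) m(z) ≤ G(x,y) ≤ (L₁/μ²) m(z)`. -/
theorem merit_function_duality_gap_bounds {n m : ℕ}
    (g : EuclideanSpace ℝ (Fin n) × EuclideanSpace ℝ (Fin m) → ℝ)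
    (μ L₁ : ℝ) (hμ : 0 < μ) (hL₁ : 0 < L₁)
    (hg : Differentiable ℝ g)
    (hconv : ∀ x₁ x₂ y, ⟪gradX g x₁ y - gradX g x₂ y, x₁ - x₂⟫ ≥ μ * ‖x₁ - x₂‖ ^ 2)
    (hconc : ∀ x y₁ y₂, ⟪-gradY g x y₁ + gradY g x y₂, y₁ - y₂⟫ ≥ μ * ‖y₁ - y₂‖ ^ 2)
    (hLip : ∀ x₁ y₁ x₂ y₂,
      Real.sqrt (‖gradX g x₁ y₁ - gradX g x₂ y₂‖ ^ 2 + ‖gradY g x₁ y₁ - gradY g x₂ y₂‖ ^ 2)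
        ≤ L₁ * Real.sqrt (‖x₁ - x₂‖ ^ 2 + ‖y₁ - y₂‖ ^ 2)) :
    ∀ x y,
      μ / L₁ ^ 2 * (1 / 2 * (‖gradX g x y‖ ^ 2 + ‖gradY g x y‖ ^ 2))
          ≤ (⨆ y', g (x, y')) - (⨅ x', g (x', y)) ∧
      (⨆ y', g (x, y')) - (⨅ x', g (x', y))
          ≤ L₁ / μ ^ 2 * (1 / 2 * (‖gradX g x y‖ ^ 2 + ‖gradY g x y‖ ^ 2)) := by
  intro x y
  have hX : ∀ x', HasGradientAt (fun x' => g (x', y)) (gradX g x' y) x' := fun x' =>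
    DifferentiableAt.hasGradientAt (by fun_prop)
  have hY : ∀ y', HasGradientAt (fun y' => -g (x, y')) (-gradY g x y') y' := fun y' => by
    have : HasGradientAt (fun y' => g (x, y')) (gradY g x y') y' :=
      DifferentiableAt.hasGradientAt (by fun_prop)
    rw [hasGradientAt_iff_hasFDerivAt] at this ⊢
    rw [map_neg]
    exact this.neg
  have hsq : ∀ x₁ y₁ x₂ y₂, ‖gradX g x₁ y₁ - gradX g x₂ y₂‖ ^ 2 +
      ‖gradY g x₁ y₁ - gradY g x₂ y₂‖ ^ 2 ≤ L₁ ^ 2 * (‖x₁ - x₂‖ ^ 2 + ‖y₁ - y₂‖ ^ 2) := by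
    intro x₁ y₁ x₂ y₂
    have h := pow_le_pow_left₀ (Real.sqrt_nonneg _) (hLip x₁ y₁ x₂ y₂) 2
    rwa [mul_pow, Real.sq_sqrt (by positivity), Real.sq_sqrt (by positivity)] at h
  have A := aux_block _ _ μ L₁ hμ hL₁ hX (fun a b => hconv a b y) (fun a b => by
    have h := hsq a y b y
    refine (sq_le_sq₀ (norm_nonneg _) (by positivity)).1 ?_
    simp at h
    nlinarith [sq_nonneg ‖gradY g a y - gradY g b y‖]) x
  have B := aux_block _ _ μ L₁ hμ hL₁ hY (fun a b => by
    have := hconc x a b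
    rwa [sub_neg_eq_add]) (fun a b => by
    have h := hsq x a x b
    refine (sq_le_sq₀ (norm_nonneg _) (by positivity)).1 ?_
    rw [← neg_sub', norm_neg]
    simp at h
    nlinarith [sq_nonneg ‖gradX g x a - gradX g x b‖]) y
  have hs : (⨅ y', -g (x, y')) = -⨆ y', g (x, y') := by
    rw [iSup, ← Real.sInf_neg, iInf]
    congr 1
    ext z
    simp [neg_eq_iff_eq_neg]
  rw [hs, norm_neg] at B
  obtain ⟨A1, A2⟩ := A
  obtain ⟨B1, B2⟩ := B
  constructor <;> linarith
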